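/- arXiv:2012.12034 — 2 statements merged into one kernel-verified Lean document; each statement's English description precedes it below -/
import Mathlib

section
/- Let S be a bounded linear operator on H admitting an A-adjoint. Then ω_A(S)² ≤ (1/√2) · ω_A( S^{♯_A} S + i S S^{♯_A} ). -/
noncomputable section

open ContinuousLinearMap

variable {H : Type*} [NormedAddCommGroup H] [InnerProductSpace ℂ H] [CompleteSpace H]

/-- The semi-inner product induced by the positive operator `A`: `⟨x, y⟩_A := ⟨A x, y⟩`. -/
def innA (A : H →L[ℂ] H) (x y : H) : ℂ := inner ℂ (A x) y

/-- The seminorm induced by `A`: `‖x‖_A := ⟨x, x⟩_A ^ (1/2)`. -/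
def vnormA (A : H →L[ℂ] H) (x : H) : ℝ := Real.sqrt (innA A x x).re

/-- The `A`-operator seminorm: `‖T‖_A := sup {‖T x‖_A : ‖x‖_A = 1}`. -/
def opNormA (A T : H →L[ℂ] H) : ℝ :=
  sSup {c : ℝ | ∃ x : H, vnormA A x = 1 ∧ c = vnormA A (T x)}

/-- The `A`-numerical radius: `ω_A(T) := sup {|⟨T x, x⟩_A| : ‖x‖_A = 1}`. -/
def wA (A T : H →L[ℂ] H) : ℝ :=
  sSup {c : ℝ | ∃ x : H, vnormA A x = 1 ∧ c = ‖innA A (T x) x‖}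

/-- `T` admits an `A`-adjoint: there is a bounded operator `X` with `A X = T* A`. -/
def HasAAdjoint (A T : H →L[ℂ] H) : Prop :=
  ∃ X : H →L[ℂ] H, A ∘L X = adjoint T ∘L A

/-- `X` is the reduced `A`-adjoint `T^{♯_A}` of `T`: it solves `A X = T* A` and its range
is contained in the closure of the range of `A`. -/
def IsReducedAAdjoint (A T X : H →L[ℂ] H) : Prop :=
  (A ∘L X = adjoint T ∘L A) ∧ ∀ y : H, X y ∈ closure (Set.range A)

/-! The map `⟨·, ·⟩_A` is a positive semidefinite Hermitian form. If `T` is an `A`-adjoint of `S`,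
then `⟨(T S + i S T) x, x⟩_A = ‖S x‖_A² - i ‖T x‖_A²` (the sign because `inner` is
conjugate-linear in its first argument), and Cauchy–Schwarz applied to `⟨S x, x⟩_A = ⟨x, T x⟩_A`
gives `|⟨S x, x⟩_A|² ≤ ‖S x‖_A ‖T x‖_A ≤ (‖S x‖_A² + ‖T x‖_A²) / 2` when `‖x‖_A = 1`. The claim
follows from `|Re z| + |Im z| ≤ √2 |z|`.

A supremum of an unbounded set of reals is `0` by convention, so boundedness of the `A`-numerical
range has to be proved. For an `A`-selfadjoint `R`, iterating `‖R x‖_A² ≤ ‖R² x‖_A ‖x‖_A` gives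
`‖R x‖_A ≤ ‖R‖ ‖x‖_A`, and `R = T S` then yields `‖S x‖_A² ≤ ‖T S‖ ‖x‖_A²`. -/

open Filter Asymptotics
open scoped ComplexConjugate

lemma abs_re_add_abs_im_le_sqrt_two_mul_norm (z : ℂ) : |z.re| + |z.im| ≤ √2 * ‖z‖ := by
  refine (sq_le_sq₀ (by positivity) (by positivity)).1 ?_
  calc (|z.re| + |z.im|) ^ 2 ≤ 2 * (|z.re| ^ 2 + |z.im| ^ 2) := add_sq_le
    _ = (√2 * ‖z‖) ^ 2 := by
      rw [mul_pow, Real.sq_sqrt zero_le_two, Complex.sq_norm, Complex.normSq_apply, sq_abs, sq_abs,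
        sq, sq]

lemma le_of_frequently_pow_le_const_mul_pow {a b K : ℝ} (hb : 0 ≤ b)
    (h : ∃ᶠ n : ℕ in atTop, a ^ n ≤ K * b ^ n) : a ≤ b := by
  by_contra! hba
  have hlittle : (fun n : ℕ => K * b ^ n) =o[atTop] fun n => a ^ n :=
    (isLittleO_pow_pow_of_lt_left hb hba).const_mul_left K
  obtain ⟨n, hle, hhalf⟩ := (h.and_eventually (hlittle.bound one_half_pos)).exists
  have hpos : 0 < a ^ n := pow_pos (hb.trans_lt hba) n
  rw [Real.norm_of_nonneg hpos.le] at hhalf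
  linarith [Real.le_norm_self (K * b ^ n)]

/-- `T` is an `A`-adjoint of `S`: `⟨S x, y⟩_A = ⟨x, T y⟩_A` for all `x` and `y`. This weak form of
`A T = S* A` makes sense without completeness, where `S*` need not exist. -/
def IsAAdjointPair {E : Type*} [NormedAddCommGroup E] [InnerProductSpace ℂ E]
    (A S T : E →L[ℂ] E) : Prop :=
  ∀ x y, innA A (S x) y = innA A x (T y)

lemma isAAdjointPair_of_comp_eq_adjoint_comp {A S T : H →L[ℂ] H} (hA : A.IsPositive)
    (h : A ∘L T = adjoint S ∘L A) : IsAAdjointPair A S T := by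
  intro x y
  have hy : A (T y) = adjoint S (A y) := DFunLike.congr_fun h y
  rw [innA, innA, hA.inner_left_eq_inner_right, hA.inner_left_eq_inner_right, hy,
    adjoint_inner_right]

section SemiInnerProduct

variable {E : Type*} [NormedAddCommGroup E] [InnerProductSpace ℂ E] {A : E →L[ℂ] E}

lemma innA_add_left (x y z : E) : innA A (x + y) z = innA A x z + innA A y z := by
  rw [innA, map_add, inner_add_left, innA, innA]

lemma innA_add_right (x y z : E) : innA A x (y + z) = innA A x y + innA A x z :=
  inner_add_right _ _ _

lemma innA_smul_left (c : ℂ) (x y : E) : innA A (c • x) y = conj c * innA A x y := by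
  rw [innA, map_smul, inner_smul_left, innA]

lemma innA_smul_right (c : ℂ) (x y : E) : innA A x (c • y) = c * innA A x y :=
  inner_smul_right _ _ _

lemma conj_innA (hA : A.IsPositive) (x y : E) : conj (innA A y x) = innA A x y := by
  rw [innA, inner_conj_symm, innA, hA.inner_left_eq_inner_right]

lemma vnormA_nonneg (x : E) : 0 ≤ vnormA A x :=
  Real.sqrt_nonneg _

lemma innA_self (hA : A.IsPositive) (x : E) : innA A x x = ((vnormA A x ^ 2 : ℝ) : ℂ) := by
  have hnonneg : 0 ≤ (innA A x x).re := hA.re_inner_nonneg_left x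
  rw [vnormA, Real.sq_sqrt hnonneg]
  exact (Complex.conj_eq_iff_re.1 (conj_innA hA x x)).symm

lemma norm_innA_self (hA : A.IsPositive) (x : E) : ‖innA A x x‖ = vnormA A x ^ 2 := by
  rw [innA_self hA, Complex.norm_of_nonneg (sq_nonneg _)]

lemma norm_innA_le_vnormA_mul_vnormA (hA : A.IsPositive) (x y : E) :
    ‖innA A x y‖ ≤ vnormA A x * vnormA A y :=
  let core : PreInnerProductSpace.Core ℂ E :=
    { inner := innA A
      conj_inner_symm := conj_innA hA
      re_inner_nonneg := hA.re_inner_nonneg_left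
      add_left := innA_add_left
      smul_left := fun x y c => innA_smul_left c x y }
  InnerProductSpace.Core.norm_inner_le_norm (c := core) x y

lemma vnormA_le_sqrt_norm_mul_norm (x : E) : vnormA A x ≤ √‖A‖ * ‖x‖ := by
  refine Real.sqrt_le_iff.2 ⟨by positivity, ?_⟩
  calc (innA A x x).re ≤ ‖A x‖ * ‖x‖ := re_inner_le_norm (𝕜 := ℂ) _ _
    _ ≤ ‖A‖ * ‖x‖ * ‖x‖ := by gcongr; exact A.le_opNorm x
    _ = (√‖A‖ * ‖x‖) ^ 2 := by rw [mul_pow, Real.sq_sqrt (norm_nonneg A), sq, mul_assoc]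

namespace IsAAdjointPair

variable {S T S₁ S₂ T₁ T₂ R : E →L[ℂ] E}

lemma symm (hA : A.IsPositive) (h : IsAAdjointPair A S T) : IsAAdjointPair A T S := by
  intro x y
  rw [← conj_innA hA, ← h, conj_innA hA]

lemma add (h₁ : IsAAdjointPair A S₁ T₁) (h₂ : IsAAdjointPair A S₂ T₂) :
    IsAAdjointPair A (S₁ + S₂) (T₁ + T₂) := by
  intro x y
  rw [add_apply, add_apply, innA_add_left, innA_add_right, h₁, h₂]

lemma smul (c : ℂ) (h : IsAAdjointPair A S T) : IsAAdjointPair A (c • S) (conj c • T) := by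
  intro x y
  rw [smul_apply, smul_apply, innA_smul_left, innA_smul_right, h]

lemma mul (h₁ : IsAAdjointPair A S₁ T₁) (h₂ : IsAAdjointPair A S₂ T₂) :
    IsAAdjointPair A (S₁ * S₂) (T₂ * T₁) := by
  intro x y
  rw [mul_apply_eq_comp, mul_apply_eq_comp, h₁, h₂]

lemma vnormA_apply_sq_le (hA : A.IsPositive) (h : IsAAdjointPair A S T) (x : E) :
    vnormA A (S x) ^ 2 ≤ vnormA A ((T * S) x) * vnormA A x := by
  rw [← norm_innA_self hA, h, mul_comm]
  exact norm_innA_le_vnormA_mul_vnormA hA x _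

lemma vnormA_apply_pow_two_pow_le (hA : A.IsPositive) (hR : IsAAdjointPair A R R) (x : E) (k : ℕ) :
    vnormA A (R x) ^ 2 ^ k * vnormA A x ≤ vnormA A ((R ^ 2 ^ k) x) * vnormA A x ^ 2 ^ k := by
  have nonneg := vnormA_nonneg (A := A)
  induction k generalizing R with
  | zero => simp
  | succ k ih =>
    calc vnormA A (R x) ^ 2 ^ (k + 1) * vnormA A x
        = (vnormA A (R x) ^ 2) ^ 2 ^ k * vnormA A x := by rw [pow_succ', pow_mul]
      _ ≤ (vnormA A ((R * R) x) * vnormA A x) ^ 2 ^ k * vnormA A x := by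
        gcongr
        · exact nonneg x
        · exact hR.vnormA_apply_sq_le hA x
      _ = vnormA A ((R * R) x) ^ 2 ^ k * vnormA A x * vnormA A x ^ 2 ^ k := by ring
      _ ≤ vnormA A (((R * R) ^ 2 ^ k) x) * vnormA A x ^ 2 ^ k * vnormA A x ^ 2 ^ k :=
        mul_le_mul_of_nonneg_right (ih (hR.mul hR)) (pow_nonneg (nonneg x) _)
      _ = vnormA A ((R ^ 2 ^ (k + 1)) x) * vnormA A x ^ 2 ^ (k + 1) := by
        rw [← sq, ← pow_mul, ← pow_succ', mul_assoc, ← pow_add, ← two_mul, ← pow_succ']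

lemma vnormA_apply_le_opNorm_mul (hA : A.IsPositive) (hR : IsAAdjointPair A R R) (x : E) :
    vnormA A (R x) ≤ ‖R‖ * vnormA A x := by
  rcases (vnormA_nonneg x).eq_or_lt' with hx | hx
  · have hsq := hR.vnormA_apply_sq_le hA x
    rw [hx, mul_zero] at hsq ⊢
    exact (pow_eq_zero_iff two_ne_zero).1 (hsq.antisymm (sq_nonneg _)) |>.le
  · have hpow (k : ℕ) : vnormA A (R x) ^ 2 ^ k ≤
        √‖A‖ * ‖x‖ / vnormA A x * (‖R‖ * vnormA A x) ^ 2 ^ k := by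
      rw [div_mul_eq_mul_div, le_div_iff₀ hx]
      calc vnormA A (R x) ^ 2 ^ k * vnormA A x
          ≤ vnormA A ((R ^ 2 ^ k) x) * vnormA A x ^ 2 ^ k := hR.vnormA_apply_pow_two_pow_le hA x k
        _ ≤ √‖A‖ * (‖R‖ ^ 2 ^ k * ‖x‖) * vnormA A x ^ 2 ^ k := by
          gcongr
          refine (vnormA_le_sqrt_norm_mul_norm _).trans ?_
          gcongr
          exact le_of_opNorm_le _ (norm_pow_le' R (by positivity)) x
        _ = √‖A‖ * ‖x‖ * (‖R‖ * vnormA A x) ^ 2 ^ k := by ring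
    exact le_of_frequently_pow_le_const_mul_pow (by positivity)
      ((tendsto_pow_atTop_atTop_of_one_lt one_lt_two).frequently (Frequently.of_forall hpow))

lemma vnormA_apply_sq_le_opNorm_mul_sq (hA : A.IsPositive) (h : IsAAdjointPair A S T) (x : E) :
    vnormA A (S x) ^ 2 ≤ ‖T * S‖ * vnormA A x ^ 2 :=
  calc vnormA A (S x) ^ 2 ≤ vnormA A ((T * S) x) * vnormA A x := h.vnormA_apply_sq_le hA x
    _ ≤ ‖T * S‖ * vnormA A x * vnormA A x :=
      mul_le_mul_of_nonneg_right (((h.symm hA).mul h).vnormA_apply_le_opNorm_mul hA x)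
        (vnormA_nonneg x)
    _ = ‖T * S‖ * vnormA A x ^ 2 := by ring

lemma norm_innA_apply_self_le_wA (hA : A.IsPositive) (h : IsAAdjointPair A S T) {x : E}
    (hx : vnormA A x = 1) : ‖innA A (S x) x‖ ≤ wA A S := by
  refine le_csSup ⟨√‖T * S‖, ?_⟩ ⟨x, hx, rfl⟩
  rintro _ ⟨y, hy, rfl⟩
  calc ‖innA A (S y) y‖ ≤ vnormA A (S y) * vnormA A y := norm_innA_le_vnormA_mul_vnormA hA _ _
    _ = vnormA A (S y) := by rw [hy, mul_one]
    _ ≤ √‖T * S‖ :=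
      Real.le_sqrt_of_sq_le (by simpa [hy] using h.vnormA_apply_sq_le_opNorm_mul_sq hA y)

lemma innA_mul_add_I_smul_mul_apply_self (hA : A.IsPositive) (h : IsAAdjointPair A S T) (x : E) :
    innA A ((T * S + Complex.I • (S * T)) x) x =
      ((vnormA A (S x) ^ 2 : ℝ) : ℂ) - Complex.I * ((vnormA A (T x) ^ 2 : ℝ) : ℂ) := by
  rw [add_apply, smul_apply, mul_apply_eq_comp, mul_apply_eq_comp, innA_add_left, innA_smul_left,
    h.symm hA, h (T x), innA_self hA, innA_self hA, Complex.conj_I, neg_mul, sub_eq_add_neg]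

lemma vnormA_sq_add_vnormA_sq_le (hA : A.IsPositive) (h : IsAAdjointPair A S T) (x : E) :
    vnormA A (S x) ^ 2 + vnormA A (T x) ^ 2 ≤
      √2 * ‖innA A ((T * S + Complex.I • (S * T)) x) x‖ := by
  rw [h.innA_mul_add_I_smul_mul_apply_self hA]
  refine le_trans (le_of_eq ?_) (abs_re_add_abs_im_le_sqrt_two_mul_norm _)
  simp [-Complex.ofReal_pow]

lemma norm_innA_apply_self_sq_le (hA : A.IsPositive) (h : IsAAdjointPair A S T) (x : E) :
    ‖innA A (S x) x‖ ^ 2 ≤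
      1 / √2 * ‖innA A ((T * S + Complex.I • (S * T)) x) x‖ * vnormA A x ^ 2 := by
  have hS : ‖innA A (S x) x‖ ≤ vnormA A (S x) * vnormA A x := norm_innA_le_vnormA_mul_vnormA hA _ _
  have hT : ‖innA A (S x) x‖ ≤ vnormA A x * vnormA A (T x) :=
    h x x ▸ norm_innA_le_vnormA_mul_vnormA hA _ _
  calc ‖innA A (S x) x‖ ^ 2
      ≤ (vnormA A (S x) * vnormA A x) * (vnormA A x * vnormA A (T x)) := by
        rw [sq]
        exact mul_le_mul hS hT (norm_nonneg _) ((norm_nonneg _).trans hS)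
    _ = vnormA A (S x) * vnormA A (T x) * vnormA A x ^ 2 := by ring
    _ ≤ (vnormA A (S x) ^ 2 + vnormA A (T x) ^ 2) / 2 * vnormA A x ^ 2 := by
        gcongr
        linarith [two_mul_le_add_sq (vnormA A (S x)) (vnormA A (T x))]
    _ ≤ √2 * ‖innA A ((T * S + Complex.I • (S * T)) x) x‖ / 2 * vnormA A x ^ 2 := by
        gcongr
        exact h.vnormA_sq_add_vnormA_sq_le hA x
    _ = 1 / √2 * ‖innA A ((T * S + Complex.I • (S * T)) x) x‖ * vnormA A x ^ 2 := by
        rw [mul_div_right_comm, Real.sqrt_div_self']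

end IsAAdjointPair

lemma wA_nonneg (A S : E →L[ℂ] E) : 0 ≤ wA A S :=
  Real.sSup_nonneg (by rintro _ ⟨x, -, rfl⟩; exact norm_nonneg _)

lemma wA_sq_le {S : E →L[ℂ] E} {C : ℝ} (hC : 0 ≤ C)
    (h : ∀ x, vnormA A x = 1 → ‖innA A (S x) x‖ ^ 2 ≤ C) : wA A S ^ 2 ≤ C := by
  rw [← Real.le_sqrt (wA_nonneg A S) hC]
  refine Real.sSup_le ?_ (Real.sqrt_nonneg C)
  rintro _ ⟨x, hx, rfl⟩
  exact Real.le_sqrt_of_sq_le (h x hx)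

theorem stmt16_general (hA : A.IsPositive) (_hA0 : A ≠ 0) {S T : E →L[ℂ] E}
    (h : IsAAdjointPair A S T) :
    wA A S ^ 2 ≤ (1 / √2) * wA A (T * S + Complex.I • (S * T)) := by
  have hT : IsAAdjointPair A T S := h.symm hA
  have hform := (hT.mul h).add ((h.mul hT).smul Complex.I)
  refine wA_sq_le (mul_nonneg (by positivity) (wA_nonneg A _)) fun x hx => ?_
  calc ‖innA A (S x) x‖ ^ 2
      ≤ 1 / √2 * ‖innA A ((T * S + Complex.I • (S * T)) x) x‖ := by
        simpa only [hx, one_pow, mul_one] using h.norm_innA_apply_self_sq_le hA x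
    _ ≤ 1 / √2 * wA A (T * S + Complex.I • (S * T)) := by
        gcongr
        exact hform.norm_innA_apply_self_le_wA hA hx

end SemiInnerProduct

theorem stmt16 (A : H →L[ℂ] H) (hA : A.IsPositive) (hA0 : A ≠ 0)
    (S Ssharp : H →L[ℂ] H) (hS : IsReducedAAdjoint A S Ssharp) :
    wA A S ^ 2 ≤ (1 / Real.sqrt 2) * wA A (Ssharp * S + Complex.I • (S * Ssharp)) :=
  stmt16_general hA hA0 (isAAdjointPair_of_comp_eq_adjoint_comp hA hS.1)
end
end

section
/- Let S_1, …, S_k be bounded linear operators on a complex Hilbert space H and let n ≥ 1 be an integer. Then ω( Σ_{i=1}^k S_i )^{2n} ≤ (k^{2n−1}/2) · ‖ Σ_{i=1}^k ( |S_i|^{2n} + |S_i^*|^{2n} ) ‖. -/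
/-
Fix a unit vector `x` and an operator `X` with `|X| = R`. For positive `R` the moments
`m ↦ ⟨R ^ m x, x⟩` are log-convex, by the Cauchy–Schwarz inequality for the form `⟨R ^ m ·, ·⟩`.
Since `⟨R x, x⟩ ≤ ‖R x‖`, their successive ratios are at least `‖R x‖ = ‖X x‖` from `m = 1` on,
so `‖X x‖ ^ p ≤ ⟨|X| ^ p x, x⟩` for every `p ≥ 2`. The number `|⟨X x, x⟩|` is at most both `‖X x‖`
and `‖X* x‖`, so averaging this bound for `X` and `X*` controls `|⟨X x, x⟩| ^ p`. The power mean
inequality passes from one operator to a sum.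
-/

noncomputable section

open ContinuousLinearMap

variable {H : Type*} [NormedAddCommGroup H] [InnerProductSpace ℂ H] [CompleteSpace H]

/-- The numerical radius: `ω(T) := sup {|⟨T x, x⟩| : ‖x‖ = 1}`. -/
def nrad (T : H →L[ℂ] H) : ℝ :=
  sSup {c : ℝ | ∃ x : H, ‖x‖ = 1 ∧ c = ‖(inner ℂ (T x) x : ℂ)‖}

/-- `R` is the absolute value `|X| = (X* X)^{1/2}` of `X`, i.e. the positive square root
of `X* X`. -/
def IsAbsOf (X R : H →L[ℂ] H) : Prop :=
  R.IsPositive ∧ R * R = adjoint X * X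

section Moments

variable {𝕜 E : Type*} [RCLike 𝕜] [NormedAddCommGroup E] [InnerProductSpace 𝕜 E] {T : E →L[𝕜] E}

local notation "⟪" x ", " y "⟫" => inner 𝕜 x y

lemma reApplyInnerSelf_le_norm_mul_sq (T : E →L[𝕜] E) (x : E) :
    T.reApplyInnerSelf x ≤ ‖T‖ * ‖x‖ ^ 2 :=
  calc T.reApplyInnerSelf x
    _ ≤ ‖T x‖ * ‖x‖ := re_inner_le_norm (T x) x
    _ ≤ ‖T‖ * ‖x‖ * ‖x‖ := by gcongr; exact T.le_opNorm x
    _ = ‖T‖ * ‖x‖ ^ 2 := by ring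

lemma reApplyInnerSelf_add (T U : E →L[𝕜] E) (x : E) :
    (T + U).reApplyInnerSelf x = T.reApplyInnerSelf x + U.reApplyInnerSelf x := by
  simp only [reApplyInnerSelf_apply, add_apply, inner_add_left, map_add]

lemma reApplyInnerSelf_sum {ι : Type*} (s : Finset ι) (T : ι → E →L[𝕜] E) (x : E) :
    (∑ i ∈ s, T i).reApplyInnerSelf x = ∑ i ∈ s, (T i).reApplyInnerSelf x := by
  simp only [reApplyInnerSelf_apply, sum_apply, sum_inner, map_sum]

lemma inner_pow_add_two_apply_self (hT : T.IsPositive) (m : ℕ) (x : E) :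
    ⟪(T ^ (m + 2)) x, x⟫ = ⟪(T ^ m) (T x), T x⟫ := by
  rw [pow_succ, pow_succ', mul_apply_eq_comp, mul_apply_eq_comp, hT.inner_left_eq_inner_right]

lemma isPositive_pow (hT : T.IsPositive) : ∀ m : ℕ, (T ^ m).IsPositive
  | 0 => by simp only [pow_zero, isPositive_one]
  | 1 => by rwa [pow_one]
  | m + 2 => by
    refine ⟨by simpa only [toLinearMap_pow] using hT.isSymmetric.pow (m + 2), fun x => ?_⟩
    rw [reApplyInnerSelf_apply, inner_pow_add_two_apply_self hT]
    exact (isPositive_pow hT m).re_inner_nonneg_left (T x)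

lemma norm_inner_sq_le_reApplyInnerSelf_mul (hT : T.IsPositive) (x y : E) :
    ‖⟪T x, y⟫‖ ^ 2 ≤ T.reApplyInnerSelf x * T.reApplyInnerSelf y := by
  let form : PreInnerProductSpace.Core 𝕜 E :=
    { inner u v := ⟪T u, v⟫
      conj_inner_symm u v := by
        rw [inner_conj_symm, hT.inner_left_eq_inner_right]
      re_inner_nonneg := hT.re_inner_nonneg_left
      add_left u v w := by rw [map_add, inner_add_left]
      smul_left u v c := by rw [map_smul, inner_smul_left] }
  have hsymm : ‖⟪T y, x⟫‖ = ‖⟪T x, y⟫‖ := by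
    rw [hT.inner_left_eq_inner_right, norm_inner_symm]
  calc ‖⟪T x, y⟫‖ ^ 2
    _ = ‖⟪T x, y⟫‖ * ‖⟪T y, x⟫‖ := by rw [hsymm, sq]
    _ ≤ T.reApplyInnerSelf x * T.reApplyInnerSelf y :=
      InnerProductSpace.Core.inner_mul_inner_self_le (c := form) x y

lemma reApplyInnerSelf_pow_succ_sq_le (hT : T.IsPositive) (m : ℕ) (x : E) :
    (T ^ (m + 1)).reApplyInnerSelf x ^ 2 ≤
      (T ^ m).reApplyInnerSelf x * (T ^ (m + 2)).reApplyInnerSelf x := by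
  have hinner : ⟪(T ^ (m + 1)) x, x⟫ = ⟪(T ^ m) x, T x⟫ := by
    rw [pow_succ', mul_apply_eq_comp, hT.inner_left_eq_inner_right]
  calc (T ^ (m + 1)).reApplyInnerSelf x ^ 2
    _ ≤ ‖⟪(T ^ m) x, T x⟫‖ ^ 2 := by
      rw [reApplyInnerSelf_apply, hinner]
      exact sq_le_sq' (neg_le_of_abs_le (RCLike.abs_re_le_norm _)) (RCLike.re_le_norm _)
    _ ≤ (T ^ m).reApplyInnerSelf x * (T ^ m).reApplyInnerSelf (T x) :=
      norm_inner_sq_le_reApplyInnerSelf_mul (isPositive_pow hT m) x (T x)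
    _ = (T ^ m).reApplyInnerSelf x * (T ^ (m + 2)).reApplyInnerSelf x := by
      simp only [reApplyInnerSelf_apply, inner_pow_add_two_apply_self hT]

lemma reApplyInnerSelf_sq (hT : T.IsPositive) (x : E) :
    (T ^ 2).reApplyInnerSelf x = ‖T x‖ ^ 2 := by
  rw [reApplyInnerSelf_apply, inner_pow_add_two_apply_self hT 0, pow_zero, one_apply_eq_self,
    inner_self_eq_norm_sq]

lemma norm_mul_reApplyInnerSelf_pow_succ_le (hT : T.IsPositive) (m : ℕ) (x : E) :
    ‖T x‖ * (T ^ (m + 1)).reApplyInnerSelf x ≤ ‖x‖ * (T ^ (m + 2)).reApplyInnerSelf x := by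
  induction m with
  | zero =>
    calc ‖T x‖ * (T ^ 1).reApplyInnerSelf x
      _ ≤ ‖T x‖ * (‖T x‖ * ‖x‖) := by
        rw [pow_one]
        gcongr
        exact re_inner_le_norm (T x) x
      _ = ‖x‖ * (T ^ 2).reApplyInnerSelf x := by rw [reApplyInnerSelf_sq hT]; ring
  | succ m ih =>
    set a := (T ^ (m + 1)).reApplyInnerSelf x
    set b := (T ^ (m + 2)).reApplyInnerSelf x
    set c := (T ^ (m + 3)).reApplyInnerSelf x
    have hlogConvex : b ^ 2 ≤ a * c := reApplyInnerSelf_pow_succ_sq_le hT (m + 1) x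
    have hc : 0 ≤ c := (isPositive_pow hT (m + 3)).2 x
    obtain hb | hb : 0 = b ∨ 0 < b := ((isPositive_pow hT (m + 2)).2 x).eq_or_lt
    · rw [← hb, mul_zero]
      positivity
    · refine le_of_mul_le_mul_left ?_ hb
      calc b * (‖T x‖ * b)
        _ = ‖T x‖ * b ^ 2 := by ring
        _ ≤ ‖T x‖ * (a * c) := by gcongr
        _ = ‖T x‖ * a * c := by ring
        _ ≤ ‖x‖ * b * c := by gcongr
        _ = b * (‖x‖ * c) := by ring

lemma norm_apply_pow_add_two_le (hT : T.IsPositive) (m : ℕ) (x : E) :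
    ‖T x‖ ^ (m + 2) ≤ ‖x‖ ^ m * (T ^ (m + 2)).reApplyInnerSelf x := by
  induction m with
  | zero => rw [pow_zero, one_mul, reApplyInnerSelf_sq hT]
  | succ m ih =>
    calc ‖T x‖ ^ (m + 3)
      _ = ‖T x‖ ^ (m + 2) * ‖T x‖ := pow_succ _ _
      _ ≤ ‖x‖ ^ m * (T ^ (m + 2)).reApplyInnerSelf x * ‖T x‖ := by gcongr
      _ = ‖x‖ ^ m * (‖T x‖ * (T ^ (m + 2)).reApplyInnerSelf x) := by ring
      _ ≤ ‖x‖ ^ m * (‖x‖ * (T ^ (m + 3)).reApplyInnerSelf x) :=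
        mul_le_mul_of_nonneg_left (norm_mul_reApplyInnerSelf_pow_succ_le hT (m + 1) x)
          (by positivity)
      _ = ‖x‖ ^ (m + 1) * (T ^ (m + 3)).reApplyInnerSelf x := by ring

lemma norm_inner_sum_apply_pow_succ_le {ι : Type*} (s : Finset ι) (T : ι → E →L[𝕜] E) (m : ℕ)
    (x : E) :
    ‖⟪(∑ i ∈ s, T i) x, x⟫‖ ^ (m + 1) ≤
      (s.card : ℝ) ^ m * ∑ i ∈ s, ‖⟪T i x, x⟫‖ ^ (m + 1) :=
  calc ‖⟪(∑ i ∈ s, T i) x, x⟫‖ ^ (m + 1)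
    _ ≤ (∑ i ∈ s, ‖⟪T i x, x⟫‖) ^ (m + 1) := by
      rw [sum_apply, sum_inner]
      gcongr
      exact norm_sum_le _ _
    _ ≤ (s.card : ℝ) ^ m * ∑ i ∈ s, ‖⟪T i x, x⟫‖ ^ (m + 1) :=
      pow_sum_le_card_mul_sum_pow (fun _ _ => norm_nonneg _) m

end Moments

section NumericalRadius

variable {E : Type*} [NormedAddCommGroup E] [InnerProductSpace ℂ E]

lemma nrad_nonneg (T : E →L[ℂ] E) : 0 ≤ nrad T :=
  Real.sSup_nonneg (by rintro _ ⟨x, -, rfl⟩; exact norm_nonneg _)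

lemma nrad_le {T : E →L[ℂ] E} {c : ℝ} (hc : 0 ≤ c)
    (h : ∀ x : E, ‖x‖ = 1 → ‖inner ℂ (T x) x‖ ≤ c) : nrad T ≤ c :=
  Real.sSup_le (by rintro _ ⟨x, hx, rfl⟩; exact h x hx) hc

lemma nrad_pow_le {T : E →L[ℂ] E} {p : ℕ} (hp : p ≠ 0) {c : ℝ} (hc : 0 ≤ c)
    (h : ∀ x : E, ‖x‖ = 1 → ‖inner ℂ (T x) x‖ ^ p ≤ c) : nrad T ^ p ≤ c := by
  have hroot : (c ^ (p : ℝ)⁻¹) ^ p = c := Real.rpow_inv_natCast_pow hc hp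
  have hroot_nonneg : 0 ≤ c ^ (p : ℝ)⁻¹ := Real.rpow_nonneg hc _
  have hle : nrad T ≤ c ^ (p : ℝ)⁻¹ := nrad_le hroot_nonneg fun x hx =>
    le_of_pow_le_pow_left₀ hp hroot_nonneg (by rw [hroot]; exact h x hx)
  calc nrad T ^ p
    _ ≤ (c ^ (p : ℝ)⁻¹) ^ p := pow_le_pow_left₀ (nrad_nonneg T) hle p
    _ = c := hroot

end NumericalRadius

section AbsoluteValue

variable {X R R' : H →L[ℂ] H} {x : H}

lemma IsAbsOf.norm_apply (h : IsAbsOf X R) (x : H) : ‖R x‖ = ‖X x‖ := by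
  rw [← sq_eq_sq₀ (norm_nonneg _) (norm_nonneg _), ← reApplyInnerSelf_sq h.1, sq R, h.2,
    reApplyInnerSelf_apply, mul_def, ← apply_norm_sq_eq_inner_adjoint_left]

lemma IsAbsOf.norm_apply_pow_le (h : IsAbsOf X R) (hx : ‖x‖ = 1) {p : ℕ} (hp : 2 ≤ p) :
    ‖X x‖ ^ p ≤ (R ^ p).reApplyInnerSelf x := by
  obtain ⟨m, rfl⟩ := Nat.exists_eq_add_of_le' hp
  simpa only [h.norm_apply, hx, one_pow, one_mul] using norm_apply_pow_add_two_le h.1 m x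

lemma IsAbsOf.norm_inner_pow_le (h : IsAbsOf X R) (h' : IsAbsOf (adjoint X) R') (hx : ‖x‖ = 1)
    {p : ℕ} (hp : 2 ≤ p) :
    ‖inner ℂ (X x) x‖ ^ p ≤ (R ^ p + R' ^ p).reApplyInnerSelf x / 2 := by
  have hX : ‖inner ℂ (X x) x‖ ≤ ‖X x‖ := by
    simpa only [hx, mul_one] using norm_inner_le_norm (𝕜 := ℂ) (X x) x
  have hX' : ‖inner ℂ (X x) x‖ ≤ ‖adjoint X x‖ := by
    simpa only [adjoint_inner_right, hx, one_mul] using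
      norm_inner_le_norm (𝕜 := ℂ) x (adjoint X x)
  have hpow : ‖inner ℂ (X x) x‖ ^ p ≤ (R ^ p).reApplyInnerSelf x :=
    (pow_le_pow_left₀ (norm_nonneg _) hX p).trans (h.norm_apply_pow_le hx hp)
  have hpow' : ‖inner ℂ (X x) x‖ ^ p ≤ (R' ^ p).reApplyInnerSelf x :=
    (pow_le_pow_left₀ (norm_nonneg _) hX' p).trans (h'.norm_apply_pow_le hx hp)
  rw [reApplyInnerSelf_add]
  linarith

end AbsoluteValue

lemma sum_norm_inner_pow_le {ι : Type*} (s : Finset ι) {S absS absSstar : ι → H →L[ℂ] H}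
    (habs : ∀ i ∈ s, IsAbsOf (S i) (absS i))
    (habsStar : ∀ i ∈ s, IsAbsOf (adjoint (S i)) (absSstar i)) {x : H} (hx : ‖x‖ = 1)
    {p : ℕ} (hp : 2 ≤ p) :
    ∑ i ∈ s, ‖inner ℂ (S i x) x‖ ^ p ≤ ‖∑ i ∈ s, (absS i ^ p + absSstar i ^ p)‖ / 2 :=
  calc ∑ i ∈ s, ‖inner ℂ (S i x) x‖ ^ p
    _ ≤ ∑ i ∈ s, (absS i ^ p + absSstar i ^ p).reApplyInnerSelf x / 2 :=
      Finset.sum_le_sum fun i hi => (habs i hi).norm_inner_pow_le (habsStar i hi) hx hp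
    _ = (∑ i ∈ s, (absS i ^ p + absSstar i ^ p)).reApplyInnerSelf x / 2 := by
      rw [← Finset.sum_div, reApplyInnerSelf_sum]
    _ ≤ ‖∑ i ∈ s, (absS i ^ p + absSstar i ^ p)‖ / 2 := by
      gcongr
      simpa only [hx, one_pow, mul_one] using reApplyInnerSelf_le_norm_mul_sq _ x

theorem stmt18_general {ι : Type*} (s : Finset ι) {p : ℕ} (hp : 2 ≤ p)
    {S absS absSstar : ι → H →L[ℂ] H}
    (habs : ∀ i ∈ s, IsAbsOf (S i) (absS i))
    (habsStar : ∀ i ∈ s, IsAbsOf (adjoint (S i)) (absSstar i)) :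
    nrad (∑ i ∈ s, S i) ^ p ≤
      (s.card : ℝ) ^ (p - 1) / 2 * ‖∑ i ∈ s, (absS i ^ p + absSstar i ^ p)‖ := by
  have hp_succ : p - 1 + 1 = p := by lia
  refine nrad_pow_le (by lia) (by positivity) fun x hx => ?_
  calc ‖inner ℂ ((∑ i ∈ s, S i) x) x‖ ^ p
    _ ≤ (s.card : ℝ) ^ (p - 1) * ∑ i ∈ s, ‖inner ℂ (S i x) x‖ ^ p := by
      simpa only [hp_succ] using norm_inner_sum_apply_pow_succ_le s S (p - 1) x
    _ ≤ (s.card : ℝ) ^ (p - 1) * (‖∑ i ∈ s, (absS i ^ p + absSstar i ^ p)‖ / 2) := by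
      gcongr
      exact sum_norm_inner_pow_le s habs habsStar hx hp
    _ = (s.card : ℝ) ^ (p - 1) / 2 * ‖∑ i ∈ s, (absS i ^ p + absSstar i ^ p)‖ := by ring

theorem stmt18 (k : ℕ) (hk : 1 ≤ k) (n : ℕ) (hn : 1 ≤ n)
    (S absS absSstar : Fin k → (H →L[ℂ] H))
    (habs : ∀ i, IsAbsOf (S i) (absS i))
    (habsStar : ∀ i, IsAbsOf (adjoint (S i)) (absSstar i)) :
    nrad (∑ i, S i) ^ (2 * n) ≤
      ((k : ℝ) ^ (2 * n - 1) / 2) *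
        ‖∑ i, ((absS i) ^ (2 * n) + (absSstar i) ^ (2 * n))‖ := by
  simpa only [Finset.card_univ, Fintype.card_fin] using
    stmt18_general Finset.univ (by lia : 2 ≤ 2 * n) (fun i _ => habs i) fun i _ => habsStar i
end
end
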